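/- arXiv:2307.07244 — 4 statements merged into one kernel-verified Lean document; each statement's English description precedes it below -/
import Mathlib

section
/- For every complex 2×2 Jones matrix J, the Mueller matrix M = ξ(J) = A (J ⊗ J*) A⁻¹ (with entries indexed M_{nm}, n,m ∈ {0,1,2,3}) satisfies det(M) = (M₀₀² − M₀₁² − M₀₂² − M₀₃²)² and also det(M) = (M₀₀² − M₁₀² − M₂₀² − M₃₀²)², i.e., the determinant can be expressed from a single row or a single column of M. -/
/-!
Every `2 × 2` matrix `J` scales the area form `ε`: `J * ε * Jᵀ = det J • ε`. Hence `J ⊗ J*` scales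
`ε ⊗ ε` by `c = det J * (det J)*`. Since `A * (ε ⊗ ε) * Aᵀ = 2 • G` for the Minkowski form
`G = diag(1, -1, -1, -1)`, the Mueller matrix `M` satisfies `M * G * Mᵀ = c • G`, and the `(0, 0)`
entry of this identity computes `c` from the first row of `M`. Inverting the identity for `A` gives
`(A⁻¹)ᵀ * (ε ⊗ ε) * A⁻¹ = 2⁻¹ • G`, so the same argument applies to `Mᵀ` and computes `c` from the
first column, also when `c = 0` and `M` itself cannot be inverted. Finally
`det M = det (J ⊗ J*) = c ^ 2`.
-/

open Matrix Complex
open scoped Kronecker Matrix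

/-- The matrix `A` relating the Kronecker-product picture to the Mueller picture. -/
noncomputable def muellerA : Matrix (Fin 4) (Fin 4) ℂ :=
  !![1, 0, 0, 1;
     1, 0, 0, -1;
     0, 1, 1, 0;
     0, Complex.I, -Complex.I, 0]

/-- The Mueller matrix `ξ(J) = A (J ⊗ J*) A⁻¹` of a Jones matrix `J`. -/
noncomputable def mueller (J : Matrix (Fin 2) (Fin 2) ℂ) : Matrix (Fin 4) (Fin 4) ℂ :=
  muellerA * (Matrix.reindex finProdFinEquiv finProdFinEquiv (J ⊗ₖ J.map star)) * muellerA⁻¹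

/-- `M` is a similitude of the bilinear form with Gram matrix `B`, with multiplier `c`. The form is
evaluated on the rows of `M`, so that `c` can be read off a single row. -/
def IsSimilitude {n R : Type*} [Fintype n] [CommSemiring R] (B : Matrix n n R) (c : R)
    (M : Matrix n n R) : Prop :=
  M * B * Mᵀ = c • B

namespace IsSimilitude

variable {m n R : Type*} [Fintype m] [Fintype n] [CommSemiring R] {c d : R}

theorem smul_form {B M : Matrix n n R} (hM : IsSimilitude B c M) (a : R) :
    IsSimilitude (a • B) c M := by
  rw [IsSimilitude, mul_smul_comm, smul_mul_assoc, hM, smul_comm]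

theorem of_intertwining {B N : Matrix n n R} {M : Matrix m m R} {P : Matrix m n R}
    (hN : IsSimilitude B c N) (hP : M * P = P * N) : IsSimilitude (P * B * Pᵀ) c M :=
  calc
    M * (P * B * Pᵀ) * Mᵀ = M * P * B * (M * P)ᵀ := by
      simp only [transpose_mul, Matrix.mul_assoc]
    _ = P * (N * B * Nᵀ) * Pᵀ := by
      simp only [hP, transpose_mul, Matrix.mul_assoc]
    _ = c • (P * B * Pᵀ) := by
      rw [hN, Matrix.mul_smul, Matrix.smul_mul]

theorem kronecker {B M : Matrix m m R} {C N : Matrix n n R} (hM : IsSimilitude B c M)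
    (hN : IsSimilitude C d N) : IsSimilitude (B ⊗ₖ C) (c * d) (M ⊗ₖ N) := by
  rw [IsSimilitude, ← kroneckerMap_transpose, ← mul_kronecker_mul, ← mul_kronecker_mul, hM, hN,
    smul_kronecker, kronecker_smul, smul_smul]

theorem reindex {B M : Matrix m m R} (hM : IsSimilitude B c M) (e : m ≃ n) :
    IsSimilitude (Matrix.reindex e e B) c (Matrix.reindex e e M) := by
  simp only [IsSimilitude, reindex_apply, transpose_submatrix, submatrix_mul_equiv]
  exact congrArg (submatrix · e.symm e.symm) hM

end IsSimilitude

section Forms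

variable (R : Type*) [CommRing R]

/-- The standard area form `ε` on the plane, which a Jones matrix scales by its determinant. -/
def areaForm : Matrix (Fin 2) (Fin 2) R :=
  !![0, 1; -1, 0]

/-- The form `ε ⊗ ε`, which `J ⊗ J*` scales, on the index set `Fin 4` on which `mueller` places
Kronecker products. -/
def areaFormSq : Matrix (Fin 4) (Fin 4) R :=
  Matrix.reindex finProdFinEquiv finProdFinEquiv (areaForm R ⊗ₖ areaForm R)

/-- The Minkowski form, of signature `(1, 3)`, on Stokes vectors, which Mueller matrices scale. -/
def minkowskiForm : Matrix (Fin 4) (Fin 4) R :=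
  diagonal ![1, -1, -1, -1]

variable {R}

theorem isSimilitude_areaForm (J : Matrix (Fin 2) (Fin 2) R) :
    IsSimilitude (areaForm R) J.det J := by
  ext i j
  fin_cases i <;> fin_cases j <;>
    simp [areaForm, Matrix.mul_apply, Fin.sum_univ_two, det_fin_two] <;> ring

theorem isSimilitude_areaFormSq (J K : Matrix (Fin 2) (Fin 2) R) :
    IsSimilitude (areaFormSq R) (J.det * K.det)
      (Matrix.reindex finProdFinEquiv finProdFinEquiv (J ⊗ₖ K)) :=
  ((isSimilitude_areaForm J).kronecker (isSimilitude_areaForm K)).reindex finProdFinEquiv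

theorem areaFormSq_eq :
    areaFormSq R = !![0, 0, 0, 1; 0, 0, -1, 0; 0, -1, 0, 0; 1, 0, 0, 0] := by
  ext i j
  fin_cases i <;> fin_cases j <;>
    simp [areaFormSq, areaForm, finProdFinEquiv, Fin.divNat, Fin.modNat]

theorem areaFormSq_mul_self : areaFormSq R * areaFormSq R = 1 := by
  ext i j
  fin_cases i <;> fin_cases j <;> simp [areaFormSq_eq, Matrix.mul_apply, Fin.sum_univ_four]

theorem minkowskiForm_mul_self : minkowskiForm R * minkowskiForm R = 1 := by
  ext i j
  fin_cases i <;> fin_cases j <;> simp [minkowskiForm]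

theorem mul_minkowskiForm_mul_transpose_apply_self {m : Type*} (M : Matrix m (Fin 4) R) (i : m) :
    (M * minkowskiForm R * Mᵀ) i i = M i 0 ^ 2 - M i 1 ^ 2 - M i 2 ^ 2 - M i 3 ^ 2 := by
  rw [Matrix.mul_apply]
  simp only [minkowskiForm, mul_diagonal, transpose_apply, Fin.sum_univ_four, cons_val]
  ring

theorem IsSimilitude.multiplier_eq_row_zero {M : Matrix (Fin 4) (Fin 4) R} {c : R}
    (hM : IsSimilitude (minkowskiForm R) c M) :
    c = M 0 0 ^ 2 - M 0 1 ^ 2 - M 0 2 ^ 2 - M 0 3 ^ 2 := by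
  rw [← mul_minkowskiForm_mul_transpose_apply_self, hM]
  simp [minkowskiForm]

end Forms

theorem muellerA_mul_areaFormSq_mul_transpose :
    muellerA * areaFormSq ℂ * muellerAᵀ = (2 : ℂ) • minkowskiForm ℂ := by
  ext i j
  fin_cases i <;> fin_cases j <;>
    simp [muellerA, areaFormSq_eq, minkowskiForm, Matrix.mul_apply, Fin.sum_univ_four] <;> norm_num

theorem isUnit_det_muellerA : IsUnit muellerA.det := by
  refine isUnit_det_of_right_inverse
    (B := (2⁻¹ : ℂ) • (areaFormSq ℂ * muellerAᵀ * minkowskiForm ℂ)) ?_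
  rw [Matrix.mul_smul, ← Matrix.mul_assoc, ← Matrix.mul_assoc,
    muellerA_mul_areaFormSq_mul_transpose, Matrix.smul_mul, minkowskiForm_mul_self,
    inv_smul_smul₀ two_ne_zero]

theorem transpose_inv_muellerA_mul_areaFormSq_mul_inv :
    muellerA⁻¹ᵀ * areaFormSq ℂ * muellerA⁻¹ = (2⁻¹ : ℂ) • minkowskiForm ℂ :=
  calc
    muellerA⁻¹ᵀ * areaFormSq ℂ * muellerA⁻¹ = (muellerA * areaFormSq ℂ * muellerAᵀ)⁻¹ := by
      rw [Matrix.mul_inv_rev, Matrix.mul_inv_rev, inv_eq_right_inv areaFormSq_mul_self,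
        transpose_nonsing_inv, Matrix.mul_assoc]
    _ = (2⁻¹ : ℂ) • minkowskiForm ℂ := by
      rw [muellerA_mul_areaFormSq_mul_transpose]
      refine inv_eq_right_inv ?_
      rw [smul_mul_smul_comm, minkowskiForm_mul_self, mul_inv_cancel₀ two_ne_zero, one_smul]

theorem det_map_star {n R : Type*} [Fintype n] [DecidableEq n] [CommRing R] [StarRing R]
    (M : Matrix n n R) : (M.map star).det = star M.det :=
  ((starRingEnd R).map_det M).symm

section Mueller

variable (J : Matrix (Fin 2) (Fin 2) ℂ)

theorem det_mueller : (mueller J).det = (J.det * star J.det) ^ 2 := by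
  rw [mueller, det_conj ((isUnit_iff_isUnit_det _).mpr isUnit_det_muellerA), det_reindex_self,
    det_kronecker, det_map_star, Fintype.card_fin, mul_pow]

theorem isSimilitude_mueller :
    IsSimilitude (minkowskiForm ℂ) (J.det * star J.det) (mueller J) := by
  have hJ := isSimilitude_areaFormSq J (J.map star)
  have hP : mueller J * muellerA = muellerA *
      Matrix.reindex finProdFinEquiv finProdFinEquiv (J ⊗ₖ J.map star) :=
    nonsing_inv_mul_cancel_right _ _ isUnit_det_muellerA
  have h := (hJ.of_intertwining hP).smul_form 2⁻¹
  rwa [muellerA_mul_areaFormSq_mul_transpose, inv_smul_smul₀ two_ne_zero, det_map_star] at h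

theorem isSimilitude_transpose_mueller :
    IsSimilitude (minkowskiForm ℂ) (J.det * star J.det) (mueller J)ᵀ := by
  have hJ := isSimilitude_areaFormSq Jᵀ (J.map star)ᵀ
  have hP : (mueller J)ᵀ * muellerA⁻¹ᵀ = muellerA⁻¹ᵀ *
      Matrix.reindex finProdFinEquiv finProdFinEquiv (Jᵀ ⊗ₖ (J.map star)ᵀ) := by
    rw [← transpose_mul, mueller, Matrix.mul_assoc,
      nonsing_inv_mul_cancel_left _ _ isUnit_det_muellerA, transpose_mul, transpose_reindex,
      kroneckerMap_transpose]
  have h := (hJ.of_intertwining hP).smul_form 2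
  rwa [transpose_transpose, transpose_inv_muellerA_mul_areaFormSq_mul_inv,
    smul_inv_smul₀ two_ne_zero, det_transpose, det_transpose, det_map_star] at h

end Mueller

/-- the determinant of a Mueller matrix `M = ξ(J)` can be expressed from a
single row or a single column: `det M = (M₀₀² − M₀₁² − M₀₂² − M₀₃²)²
= (M₀₀² − M₁₀² − M₂₀² − M₃₀²)²`. -/
theorem det_mueller_row_col (J : Matrix (Fin 2) (Fin 2) ℂ) :
    (mueller J).det =
        ((mueller J 0 0) ^ 2 - (mueller J 0 1) ^ 2 - (mueller J 0 2) ^ 2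
          - (mueller J 0 3) ^ 2) ^ 2 ∧
      (mueller J).det =
        ((mueller J 0 0) ^ 2 - (mueller J 1 0) ^ 2 - (mueller J 2 0) ^ 2
          - (mueller J 3 0) ^ 2) ^ 2 := by
  rw [det_mueller]
  exact ⟨congrArg (· ^ 2) (isSimilitude_mueller J).multiplier_eq_row_zero,
    congrArg (· ^ 2) (isSimilitude_transpose_mueller J).multiplier_eq_row_zero⟩
end

section
/- For every complex 2×2 Jones matrix J, every entry of the 4×4 matrix ξ(J) = A (J ⊗ J*) A⁻¹ is a real number. -/
open Matrix Complex
open scoped Kronecker Matrix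

/-! Entrywise conjugation replaces `J ⊗ J*` by `J* ⊗ J`, that is, it exchanges the two tensor
factors, permuting rows and columns by an involution `σ`. It acts on `A` by permuting the columns
by the same `σ`, hence on `A⁻¹` by permuting the rows. In the product `A (J ⊗ J*) A⁻¹` these
permutations cancel, so the product is its own conjugate. -/

/-- The permutation of `n` that exchanges the tensor factors when `e` identifies `p × p` with `n`:
it sends `e (a, b)` to `e (b, a)`. -/
def tensorSwap {n p : Type*} (e : p × p ≃ n) : Equiv.Perm n :=
  e.permCongr (Equiv.prodComm p p)

section EntrywiseStar

variable {l m n p R : Type*} [CommRing R] [StarRing R]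

theorem map_star_mul [Fintype m] (M : Matrix l m R) (N : Matrix m n R) :
    (M * N).map star = M.map star * N.map star :=
  Matrix.map_mul (f := starRingEnd R)

theorem map_star_nonsing_inv [Fintype n] [DecidableEq n] (A : Matrix n n R) :
    A⁻¹.map star = (A.map star)⁻¹ :=
  calc A⁻¹.map star = A⁻¹ᵀᴴ := rfl
    _ = Aᵀ⁻¹ᴴ := by rw [transpose_nonsing_inv]
    _ = Aᵀᴴ⁻¹ := conjTranspose_nonsing_inv Aᵀ

theorem map_star_reindex_kronecker_map_star (e : p × p ≃ n) (J : Matrix p p R) :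
    (reindex e e (J ⊗ₖ J.map star)).map star =
      (reindex e e (J ⊗ₖ J.map star)).submatrix (tensorSwap e) (tensorSwap e) := by
  ext i j
  simp [tensorSwap, mul_comm]

theorem map_star_mul_mul_inv_eq_self [Fintype n] [DecidableEq n] (σ : Equiv.Perm n)
    {A M : Matrix n n R} (hA : A.map star = A.submatrix id σ)
    (hM : M.map star = M.submatrix σ σ) :
    (A * M * A⁻¹).map star = A * M * A⁻¹ := by
  have hA_inv : A⁻¹.map star = A⁻¹.submatrix σ id := by
    rw [map_star_nonsing_inv, hA]
    exact inv_submatrix_equiv A (Equiv.refl n) σ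
  calc (A * M * A⁻¹).map star
      = A.submatrix id σ * M.submatrix σ σ * A⁻¹.submatrix σ id := by
        rw [map_star_mul, map_star_mul, hA, hM, hA_inv]
    _ = A * M * A⁻¹ := by
        rw [submatrix_mul_equiv, submatrix_mul_equiv, submatrix_id_id]

theorem mueller_entries_real_general [Fintype n] [DecidableEq n] (e : p × p ≃ n)
    {A : Matrix n n R} (hA : A.map star = A.submatrix id (tensorSwap e))
    (J : Matrix p p R) (i j : n) :
    star ((A * reindex e e (J ⊗ₖ J.map star) * A⁻¹) i j) =
      (A * reindex e e (J ⊗ₖ J.map star) * A⁻¹) i j :=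
  congr_fun₂ (map_star_mul_mul_inv_eq_self (tensorSwap e) hA
    (map_star_reindex_kronecker_map_star e J)) i j

end EntrywiseStar

theorem map_star_muellerA :
    muellerA.map star =
      muellerA.submatrix id (tensorSwap (finProdFinEquiv : Fin 2 × Fin 2 ≃ Fin 4)) := by
  have swap_eq : ⇑(tensorSwap (finProdFinEquiv : Fin 2 × Fin 2 ≃ Fin 4)) = ![0, 2, 1, 3] := by
    decide
  rw [swap_eq]
  ext i j
  fin_cases i <;> fin_cases j <;> simp [muellerA]

/-- every entry of the Mueller matrix `ξ(J)` of a Jones matrix `J`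
is a real number. -/
theorem mueller_entries_real (J : Matrix (Fin 2) (Fin 2) ℂ) (n m : Fin 4) :
    (mueller J n m).im = 0 :=
  Complex.conj_eq_iff_im.mp
    (mueller_entries_real_general finProdFinEquiv map_star_muellerA J n m)
end

section
/- Let k₀, k₁, k₂, k₃ be real numbers with k₁² + k₂² + k₃² = 1, and let c = e^{i k₀} (0, k₁, k₂, k₃)ᵀ ∈ ℂ⁴. Then the matrix M with entries M_{nm} = cᴴ Γ_{nm} c satisfies M₀₀ = 1 and M₀₁ = M₀₂ = M₀₃ = M₁₀ = M₂₀ = M₃₀ = 0; consequently both transmittance quantities g_f = M₀₀ + √(M₀₁²+M₀₂²+M₀₃²) and g_r = M₀₀ + √(M₁₀²+M₂₀²+M₃₀²) equal 1. -/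
/-!
Regard `c` as the coordinates of the Jones matrix `J = ∑ i, cᵢ σᵢ`. The rows of `A` are the
conjugated Pauli matrices flattened row by row, so `Aᴴ c` is `J` flattened, and since
`A⁻¹ = ½ Aᴴ` the quadratic form `cᴴ Γₙₘ c` becomes `½ tr (Jᴴ σₙ J σₘ)`. When `J` is unitary the
first row and column of the Mueller matrix are therefore `½ tr σₘ` and `½ tr σₙ`, which vanish
except at index `0`. For a golden vector `c = u (0, k)`, `J` is the phase
`u` times the Hermitian involution `k · σ`, hence unitary.
-/

open Matrix Complex
open scoped Kronecker Matrix

/-- The Pauli matrices `σ₀, σ₁, σ₂, σ₃`. -/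
noncomputable def pauli : Fin 4 → Matrix (Fin 2) (Fin 2) ℂ :=
  ![1, !![1, 0; 0, -1], !![0, 1; 1, 0], !![0, -Complex.I; Complex.I, 0]]

/-- The matrices `Γ_{nm} = A (σ_n ⊗ σ_m*) A⁻¹`. -/
noncomputable def Gamma (n m : Fin 4) : Matrix (Fin 4) (Fin 4) ℂ :=
  muellerA * (Matrix.reindex finProdFinEquiv finProdFinEquiv
    (pauli n ⊗ₖ (pauli m).map star)) * muellerA⁻¹

/-- The Jones matrix `∑ i, c i • σᵢ` with Pauli coordinates `c`. It acts on field vectors in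
`ℂ²`, and is unitary exactly when the element preserves intensity. -/
noncomputable def jonesMatrix (c : Fin 4 → ℂ) : Matrix (Fin 2) (Fin 2) ℂ :=
  ∑ i, c i • pauli i

/-- The Mueller matrix `M_{nm} = cᴴ Γ_{nm} c` of the element with Jones matrix `jonesMatrix c`.
Its entries are kept in `ℂ`, although they are always real. -/
noncomputable def muellerMatrix (c : Fin 4 → ℂ) : Matrix (Fin 4) (Fin 4) ℂ :=
  of fun n m => star c ⬝ᵥ Gamma n m *ᵥ c

theorem pauli_zero : pauli 0 = 1 := rfl

theorem pauli_isHermitian (n : Fin 4) : (pauli n).IsHermitian := by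
  ext i j
  fin_cases n <;> fin_cases i <;> fin_cases j <;> simp [pauli]

theorem trace_pauli (n : Fin 4) : (pauli n).trace = if n = 0 then 2 else 0 := by
  fin_cases n <;> simp [pauli, trace_fin_two]

theorem jonesMatrix_eq (c : Fin 4 → ℂ) :
    jonesMatrix c = !![c 0 + c 1, c 2 - c 3 * I; c 2 + c 3 * I, c 0 - c 1] := by
  ext i j
  fin_cases i <;> fin_cases j <;>
    simp [jonesMatrix, pauli, Fin.sum_univ_four, sub_eq_add_neg]

theorem jonesMatrix_smul (a : ℂ) (c : Fin 4 → ℂ) : jonesMatrix (a • c) = a • jonesMatrix c := by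
  simp [jonesMatrix, Finset.smul_sum, smul_smul]

theorem jonesMatrix_conjTranspose (c : Fin 4 → ℂ) : (jonesMatrix c)ᴴ = jonesMatrix (star c) := by
  simp [jonesMatrix, conjTranspose_sum, (pauli_isHermitian _).eq]

theorem jonesMatrix_sq {c : Fin 4 → ℂ} (hc : c 0 = 0) :
    jonesMatrix c ^ 2 = (c 1 ^ 2 + c 2 ^ 2 + c 3 ^ 2) • 1 := by
  rw [jonesMatrix_eq, hc, sq, mul_fin_two, one_fin_two, smul_of]
  ext i j
  fin_cases i <;> fin_cases j <;>
    simp only [zero_add, zero_sub, mul_neg, neg_mul, neg_neg, Fin.zero_eta, Fin.mk_one, of_apply,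
      cons_val', cons_val_zero, cons_val_one, cons_val_fin_one, smul_cons, smul_eq_mul, mul_one,
      mul_zero, smul_empty]
  · linear_combination -c 3 ^ 2 * I_sq
  · ring
  · ring
  · linear_combination -c 3 ^ 2 * I_sq

theorem jonesMatrix_golden_mem_unitaryGroup {u : ℂ} (hu : ‖u‖ = 1) {k₁ k₂ k₃ : ℝ}
    (hk : k₁ ^ 2 + k₂ ^ 2 + k₃ ^ 2 = 1) :
    jonesMatrix (u • ![0, (k₁ : ℂ), (k₂ : ℂ), (k₃ : ℂ)]) ∈ unitaryGroup (Fin 2) ℂ := by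
  have hu' : u ∈ unitary ℂ := by
    rw [Unitary.mem_iff_star_mul_self, star_def, conj_mul', hu]
    norm_num
  have hk' : (k₁ : ℂ) ^ 2 + (k₂ : ℂ) ^ 2 + (k₃ : ℂ) ^ 2 = 1 := by exact_mod_cast hk
  have hreal : star ![0, (k₁ : ℂ), (k₂ : ℂ), (k₃ : ℂ)] = ![0, (k₁ : ℂ), (k₂ : ℂ), (k₃ : ℂ)] := by
    ext i
    fin_cases i <;> simp
  rw [jonesMatrix_smul]
  refine Unitary.smul_mem_of_mem hu' ?_
  rw [mem_unitaryGroup_iff, star_eq_conjTranspose, jonesMatrix_conjTranspose, hreal, ← sq,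
    jonesMatrix_sq rfl]
  simp [hk']

theorem muellerA_mul_conjTranspose : muellerA * muellerAᴴ = (2 : ℂ) • 1 := by
  ext i j
  fin_cases i <;> fin_cases j <;>
    simp [muellerA, mul_apply, Fin.sum_univ_four, one_add_one_eq_two]

theorem muellerA_inv : muellerA⁻¹ = (2⁻¹ : ℂ) • muellerAᴴ := by
  refine inv_eq_right_inv ?_
  rw [Matrix.mul_smul, muellerA_mul_conjTranspose, inv_smul_smul₀ two_ne_zero]

-- `vec` stacks columns while `finProdFinEquiv` enumerates pairs row by row, hence the transpose.
theorem muellerA_conjTranspose_mulVec (c : Fin 4 → ℂ) :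
    muellerAᴴ *ᵥ c = vec (jonesMatrix c)ᵀ ∘ finProdFinEquiv.symm := by
  ext i
  rw [jonesMatrix_eq]
  fin_cases i <;>
    simp [muellerA, mulVec, dotProduct, Fin.sum_univ_four, finProdFinEquiv, Fin.divNat,
      Fin.modNat, sub_eq_add_neg, mul_comm]

theorem comp_equiv_dotProduct_reindex_mulVec {m n m' n' R : Type*} [Fintype m] [Fintype n]
    [Fintype m'] [Fintype n'] [NonUnitalNonAssocSemiring R] (e : m ≃ m') (f : n ≃ n')
    (u : m → R) (B : Matrix m n R) (v : n → R) :
    (u ∘ e.symm) ⬝ᵥ reindex e f B *ᵥ (v ∘ f.symm) = u ⬝ᵥ B *ᵥ v := by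
  rw [reindex_apply, submatrix_mulVec_equiv, comp_equiv_dotProduct_comp_equiv, Equiv.symm_symm,
    Function.comp_assoc, Equiv.symm_comp_self, Function.comp_id]

theorem star_vec_dotProduct_kronecker_mulVec_vec {m n p q R : Type*} [Fintype m] [Fintype n]
    [Fintype p] [Fintype q] [NonUnitalCommSemiring R] [StarRing R] (X : Matrix m n R)
    (P : Matrix m p R) (Q : Matrix n q R) (Y : Matrix p q R) :
    star (vec Xᵀ) ⬝ᵥ (P ⊗ₖ Q) *ᵥ vec Yᵀ = (Xᴴ * P * Y * Qᵀ).trace := by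
  have hY : Q * Yᵀ * Pᵀ = (P * Y * Qᵀ)ᵀ := by
    simp only [transpose_mul, transpose_transpose, Matrix.mul_assoc]
  rw [kronecker_mulVec_vec, star_vec_dotProduct_vec, hY,
    conjTranspose_transpose_eq_transpose_conjTranspose, ← transpose_mul, trace_transpose,
    trace_mul_comm, Matrix.mul_assoc Xᴴ, Matrix.mul_assoc Xᴴ]

theorem muellerMatrix_apply (c : Fin 4 → ℂ) (n m : Fin 4) :
    muellerMatrix c n m =
      2⁻¹ * ((jonesMatrix c)ᴴ * pauli n * jonesMatrix c * pauli m).trace := by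
  have hm : ((pauli m).map star)ᵀ = pauli m := pauli_isHermitian m
  have hA : star c ᵥ* muellerA = star (muellerAᴴ *ᵥ c) := by
    rw [star_mulVec, conjTranspose_conjTranspose]
  calc star c ⬝ᵥ Gamma n m *ᵥ c
    _ = 2⁻¹ * (star (muellerAᴴ *ᵥ c) ⬝ᵥ reindex finProdFinEquiv finProdFinEquiv
          (pauli n ⊗ₖ (pauli m).map star) *ᵥ (muellerAᴴ *ᵥ c)) := by
      rw [_root_.Gamma, muellerA_inv, ← mulVec_mulVec, ← mulVec_mulVec, dotProduct_mulVec, hA,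
        smul_mulVec, mulVec_smul, dotProduct_smul, smul_eq_mul]
    _ = 2⁻¹ * (star (vec (jonesMatrix c)ᵀ) ⬝ᵥ
          (pauli n ⊗ₖ (pauli m).map star) *ᵥ vec (jonesMatrix c)ᵀ) := by
      rw [muellerA_conjTranspose_mulVec]
      exact congrArg _ (comp_equiv_dotProduct_reindex_mulVec finProdFinEquiv finProdFinEquiv
        (star (vec (jonesMatrix c)ᵀ)) _ _)
    _ = 2⁻¹ * ((jonesMatrix c)ᴴ * pauli n * jonesMatrix c * pauli m).trace := by
      rw [star_vec_dotProduct_kronecker_mulVec_vec, hm]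

theorem muellerMatrix_apply_zero {c : Fin 4 → ℂ}
    (hc : jonesMatrix c ∈ unitaryGroup (Fin 2) ℂ) (n : Fin 4) :
    muellerMatrix c n 0 = if n = 0 then 1 else 0 := by
  have hJ : jonesMatrix c * (jonesMatrix c)ᴴ = 1 := mem_unitaryGroup_iff.mp hc
  rw [muellerMatrix_apply, pauli_zero, Matrix.mul_one, trace_mul_comm, ← Matrix.mul_assoc, hJ,
    Matrix.one_mul, trace_pauli]
  simp

theorem muellerMatrix_zero_apply {c : Fin 4 → ℂ}
    (hc : jonesMatrix c ∈ unitaryGroup (Fin 2) ℂ) (m : Fin 4) :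
    muellerMatrix c 0 m = if m = 0 then 1 else 0 := by
  have hJ : (jonesMatrix c)ᴴ * jonesMatrix c = 1 := mem_unitaryGroup_iff'.mp hc
  rw [muellerMatrix_apply, pauli_zero, Matrix.mul_one, hJ, Matrix.one_mul, trace_pauli]
  simp

theorem golden_mueller_transmittance_general (c : Fin 4 → ℂ)
    (hc : jonesMatrix c ∈ unitaryGroup (Fin 2) ℂ)
    (M : Matrix (Fin 4) (Fin 4) ℂ) (hM : M = muellerMatrix c) :
    M 0 0 = 1 ∧
      M 0 1 = 0 ∧ M 0 2 = 0 ∧ M 0 3 = 0 ∧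
      M 1 0 = 0 ∧ M 2 0 = 0 ∧ M 3 0 = 0 ∧
      (M 0 0).re + Real.sqrt ((M 0 1).re ^ 2 + (M 0 2).re ^ 2 + (M 0 3).re ^ 2) = 1 ∧
      (M 0 0).re + Real.sqrt ((M 1 0).re ^ 2 + (M 2 0).re ^ 2 + (M 3 0).re ^ 2) = 1 := by
  subst hM
  simp [muellerMatrix_apply_zero hc, muellerMatrix_zero_apply hc]

/-- for `c = e^{i k₀} (0, k₁, k₂, k₃)ᵀ` with `k₁² + k₂² + k₃² = 1`, the
matrix `M_{nm} = cᴴ Γ_{nm} c` satisfies `M₀₀ = 1` and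
`M₀₁ = M₀₂ = M₀₃ = M₁₀ = M₂₀ = M₃₀ = 0`; consequently both transmittance quantities
`g_f = M₀₀ + √(M₀₁²+M₀₂²+M₀₃²)` and `g_r = M₀₀ + √(M₁₀²+M₂₀²+M₃₀²)` equal `1`. -/
theorem golden_mueller_transmittance (k₀ k₁ k₂ k₃ : ℝ)
    (hk : k₁ ^ 2 + k₂ ^ 2 + k₃ ^ 2 = 1)
    (c : Fin 4 → ℂ)
    (hc : c = fun i => Complex.exp (Complex.I * k₀) * ![0, (k₁ : ℂ), (k₂ : ℂ), (k₃ : ℂ)] i)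
    (M : Matrix (Fin 4) (Fin 4) ℂ)
    (hM : M = Matrix.of fun n m => star c ⬝ᵥ (Gamma n m).mulVec c) :
    M 0 0 = 1 ∧
      M 0 1 = 0 ∧ M 0 2 = 0 ∧ M 0 3 = 0 ∧
      M 1 0 = 0 ∧ M 2 0 = 0 ∧ M 3 0 = 0 ∧
      (M 0 0).re + Real.sqrt ((M 0 1).re ^ 2 + (M 0 2).re ^ 2 + (M 0 3).re ^ 2) = 1 ∧
      (M 0 0).re + Real.sqrt ((M 1 0).re ^ 2 + (M 2 0).re ^ 2 + (M 3 0).re ^ 2) = 1 := by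
  subst hc
  exact golden_mueller_transmittance_general _
    (jonesMatrix_golden_mem_unitaryGroup (norm_exp_I_mul_ofReal k₀) hk) M hM
end

section
/- For signs ε₁, ε₂, ε₃ ∈ {−1, +1}, the coherency matrix of the diagonal Mueller matrix M = diag(1, ε₁, ε₂, ε₃), namely C = (1/4)(Γ₀₀ + ε₁Γ₁₁ + ε₂Γ₂₂ + ε₃Γ₃₃), equals the diagonal matrix (1/4)·diag(1+ε₁+ε₂+ε₃, 1+ε₁−ε₂−ε₃, 1−ε₁+ε₂−ε₃, 1−ε₁−ε₂+ε₃), and C is positive semidefinite if and only if (ε₁,ε₂,ε₃) is one of (1,1,1), (1,−1,−1), (−1,1,−1), (−1,−1,1), i.e., the number of −1 entries is even; in particular diag(1,−1,−1,−1) fails the eigenvalue condition. -/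
open Matrix Complex
open scoped Kronecker Matrix ComplexOrder

/-!
The rows of `A` are the vectorized Pauli matrices, so conjugating `σ_n ⊗ σ_m*` by `A` expresses
the map `X ↦ σ_m X σ_n` in the Pauli basis: `(Γ_{nm})_{kl} = tr (σ_m σ_k σ_n σ_l) / 2`. Since two
Pauli matrices commute or anticommute, `σ_n σ_k σ_n = ± σ_k`, so every `Γ_{nn}` is diagonal with
entries `±1`. Positive semidefiniteness of `C` thus says that the four signed sums of
`1, ε₁, ε₂, ε₃` are nonnegative, which for signs happens exactly when `ε₁ ε₂ ε₃ = 1`.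
-/

section VecRows

variable {ι κ m n p q R : Type*}

/-- The matrix whose `i`-th row is the vectorization of `σ i`; it serves to write `A` in terms of
the Pauli matrices. As `vec` is column-major, the entry in row `i` and column `(b, a)` is
`σ i a b`. -/
def vecRows (σ : ι → Matrix m n R) : Matrix ι (n × m) R :=
  Matrix.of fun i ↦ vec (σ i)

variable [Fintype m] [Fintype n] [CommSemiring R]

theorem vecRows_mul_conjTranspose_apply [Star R] (σ : ι → Matrix m n R)
    (τ : κ → Matrix m n R) (i : ι) (j : κ) :
    (vecRows σ * (vecRows τ)ᴴ) i j = trace (σ i * (τ j)ᴴ) := calc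
  _ = star (vec (τ j)) ⬝ᵥ vec (σ i) := dotProduct_comm _ _
  _ = trace ((τ j)ᴴ * σ i) := star_vec_dotProduct_vec _ _
  _ = trace (σ i * (τ j)ᴴ) := trace_mul_comm _ _

theorem vecRows_mul_kronecker (σ : ι → Matrix m n R) (X : Matrix n p R) (Y : Matrix m q R) :
    vecRows σ * (X ⊗ₖ Y) = vecRows fun i ↦ Yᵀ * σ i * X :=
  funext fun _ ↦ vec_vecMul_kronecker _ _ _

end VecRows

theorem isHermitian_pauli (k : Fin 4) : (pauli k).IsHermitian := by
  fin_cases k <;> ext a b <;> fin_cases a <;> fin_cases b <;> simp [pauli]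

theorem pauli_mul_self (n : Fin 4) : pauli n * pauli n = 1 := by
  fin_cases n <;> simp [pauli, one_fin_two]

theorem trace_pauli_mul_pauli (k l : Fin 4) :
    trace (pauli k * pauli l) = if k = l then 2 else 0 := by
  fin_cases k <;> fin_cases l <;> simp [pauli, trace_fin_two, one_add_one_eq_two]

/-- The sign `s` in the relation `σ_n σ_k = s σ_k σ_n` between Pauli matrices: `1` if they commute,
`-1` if they anticommute. -/
def pauliSign (n k : Fin 4) : ℝ :=
  if n = 0 ∨ k = 0 ∨ n = k then 1 else -1

theorem pauli_mul_pauli_comm (n k : Fin 4) :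
    pauli n * pauli k = (pauliSign n k : ℂ) • (pauli k * pauli n) := by
  fin_cases n <;> fin_cases k <;> simp [pauli, pauliSign]

theorem pauli_conj_pauli (n k : Fin 4) :
    pauli n * pauli k * pauli n = (pauliSign n k : ℂ) • pauli k := by
  rw [pauli_mul_pauli_comm, smul_mul_assoc, Matrix.mul_assoc, pauli_mul_self, Matrix.mul_one]

theorem muellerA_eq_reindex_vecRows :
    muellerA = reindex (Equiv.refl _) finProdFinEquiv (vecRows pauli) := by
  ext k p
  fin_cases k <;> fin_cases p <;>
    simp [muellerA, vecRows, vec, pauli, finProdFinEquiv, Fin.divNat, Fin.modNat]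

theorem vecRows_pauli_mul_conjTranspose :
    vecRows pauli * (vecRows pauli)ᴴ = (2 : ℂ) • (1 : Matrix (Fin 4) (Fin 4) ℂ) := by
  ext k l
  rw [vecRows_mul_conjTranspose_apply, isHermitian_pauli, trace_pauli_mul_pauli]
  simp [one_apply]

theorem inv_muellerA : muellerA⁻¹ = (1 / 2 : ℂ) • muellerAᴴ := by
  refine inv_eq_right_inv ?_
  rw [muellerA_eq_reindex_vecRows, conjTranspose_reindex, mul_smul_comm]
  simp only [reindex_apply, submatrix_mul_equiv, vecRows_pauli_mul_conjTranspose]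
  ext k l
  simp

theorem Gamma_apply (n m k l : Fin 4) :
    Gamma n m k l = 1 / 2 * trace (pauli m * pauli k * pauli n * pauli l) := by
  have transpose_map_star : ((pauli m).map star)ᵀ = pauli m := isHermitian_pauli m
  have Gamma_eq : Gamma n m = (1 / 2 : ℂ) •
      (vecRows pauli * (pauli n ⊗ₖ (pauli m).map star) * (vecRows pauli)ᴴ) := by
    rw [_root_.Gamma, inv_muellerA, muellerA_eq_reindex_vecRows, conjTranspose_reindex,
      mul_smul_comm]
    simp only [reindex_apply, submatrix_mul_equiv]
    rfl
  rw [Gamma_eq, Matrix.smul_apply, vecRows_mul_kronecker, vecRows_mul_conjTranspose_apply,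
    transpose_map_star, isHermitian_pauli l, smul_eq_mul]

theorem Gamma_self (n : Fin 4) :
    Gamma n n = diagonal fun k ↦ (pauliSign n k : ℂ) := by
  ext k l
  rw [Gamma_apply, pauli_conj_pauli, smul_mul_assoc, trace_smul, trace_pauli_mul_pauli,
    diagonal_apply, smul_eq_mul]
  split_ifs <;> ring

/-- The coherency matrix `(1/4) ∑ n, ∑ m, M_{nm} Γ_{nm}` of a Mueller matrix `M`, whose positive
semidefiniteness is the eigenvalue condition on `M`. -/
noncomputable def coherencyMatrix (M : Matrix (Fin 4) (Fin 4) ℝ) : Matrix (Fin 4) (Fin 4) ℂ :=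
  (1 / 4 : ℂ) • ∑ n, ∑ m, (M n m : ℂ) • Gamma n m

theorem coherencyMatrix_diagonal_eq_sum (d : Fin 4 → ℝ) :
    coherencyMatrix (diagonal d) = (1 / 4 : ℂ) • ∑ n, (d n : ℂ) • Gamma n n := by
  simp [coherencyMatrix, diagonal_apply, apply_ite, ite_smul]

theorem coherencyMatrix_diagonal (d : Fin 4 → ℝ) :
    coherencyMatrix (diagonal d) =
      diagonal fun k ↦ (((∑ n, d n * pauliSign n k) / 4 : ℝ) : ℂ) := by
  ext k l
  rw [coherencyMatrix_diagonal_eq_sum, Matrix.smul_apply, Matrix.sum_apply]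
  by_cases h : k = l <;> simp [Gamma_self, h, div_eq_inv_mul]

theorem coherencyMatrix_diagonal_vec (a b c d : ℝ) :
    coherencyMatrix (diagonal ![a, b, c, d]) = diagonal
      ![(((a + b + c + d) / 4 : ℝ) : ℂ), (((a + b - c - d) / 4 : ℝ) : ℂ),
        (((a - b + c - d) / 4 : ℝ) : ℂ), (((a - b - c + d) / 4 : ℝ) : ℂ)] := by
  rw [coherencyMatrix_diagonal]
  congr 1 with k
  fin_cases k <;> simp [Fin.sum_univ_four, pauliSign, sub_eq_add_neg]

theorem posSemidef_coherencyMatrix_diagonal_vec_iff (a b c d : ℝ) :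
    (coherencyMatrix (diagonal ![a, b, c, d])).PosSemidef ↔
      0 ≤ a + b + c + d ∧ 0 ≤ a + b - c - d ∧ 0 ≤ a - b + c - d ∧ 0 ≤ a - b - c + d := by
  have nonneg_iff (x : ℝ) : (0 : ℂ) ≤ ((x / 4 : ℝ) : ℂ) ↔ 0 ≤ x := by
    rw [Complex.zero_le_real, le_div_iff₀ four_pos, zero_mul]
  rw [coherencyMatrix_diagonal_vec, posSemidef_diagonal_iff]
  simp only [Fin.forall_fin_succ, cons_val_zero, cons_val_succ, nonneg_iff,
    IsEmpty.forall_iff, and_true]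

theorem posSemidef_coherencyMatrix_diagonal_signs_iff {ε₁ ε₂ ε₃ : ℝ}
    (h₁ : ε₁ = 1 ∨ ε₁ = -1) (h₂ : ε₂ = 1 ∨ ε₂ = -1) (h₃ : ε₃ = 1 ∨ ε₃ = -1) :
    (coherencyMatrix (diagonal ![1, ε₁, ε₂, ε₃])).PosSemidef ↔ ε₁ * ε₂ * ε₃ = 1 := by
  rw [posSemidef_coherencyMatrix_diagonal_vec_iff]
  rcases h₁ with rfl | rfl <;> rcases h₂ with rfl | rfl <;> rcases h₃ with rfl | rfl <;> norm_num

/-- for signs `ε₁, ε₂, ε₃ ∈ {−1, +1}`, the coherency matrix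
`C = (1/4)(Γ₀₀ + ε₁Γ₁₁ + ε₂Γ₂₂ + ε₃Γ₃₃)` of the diagonal Mueller matrix
`diag(1, ε₁, ε₂, ε₃)` equals `(1/4)·diag(1+ε₁+ε₂+ε₃, 1+ε₁−ε₂−ε₃, 1−ε₁+ε₂−ε₃, 1−ε₁−ε₂+ε₃)`,
and `C` is positive semidefinite iff the number of `−1` entries among `(ε₁,ε₂,ε₃)` is even;
in particular `diag(1,−1,−1,−1)` fails the eigenvalue condition. -/
theorem coherency_diagonal_signs (ε₁ ε₂ ε₃ : ℝ)
    (h₁ : ε₁ = 1 ∨ ε₁ = -1) (h₂ : ε₂ = 1 ∨ ε₂ = -1) (h₃ : ε₃ = 1 ∨ ε₃ = -1)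
    (C : Matrix (Fin 4) (Fin 4) ℂ)
    (hC : C = (1 / 4 : ℂ) •
      (Gamma 0 0 + (ε₁ : ℂ) • Gamma 1 1 + (ε₂ : ℂ) • Gamma 2 2 + (ε₃ : ℂ) • Gamma 3 3)) :
    C = Matrix.diagonal
        ![(((1 + ε₁ + ε₂ + ε₃) / 4 : ℝ) : ℂ), (((1 + ε₁ - ε₂ - ε₃) / 4 : ℝ) : ℂ),
          (((1 - ε₁ + ε₂ - ε₃) / 4 : ℝ) : ℂ), (((1 - ε₁ - ε₂ + ε₃) / 4 : ℝ) : ℂ)] ∧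
      (C.PosSemidef ↔
        (ε₁, ε₂, ε₃) = (1, 1, 1) ∨ (ε₁, ε₂, ε₃) = (1, -1, -1) ∨
          (ε₁, ε₂, ε₃) = (-1, 1, -1) ∨ (ε₁, ε₂, ε₃) = (-1, -1, 1)) ∧
      ¬ ((1 / 4 : ℂ) •
          (Gamma 0 0 + (-1 : ℂ) • Gamma 1 1 + (-1 : ℂ) • Gamma 2 2 +
            (-1 : ℂ) • Gamma 3 3)).PosSemidef := by
  have coherency_eq (a b c : ℝ) : (1 / 4 : ℂ) •
      (Gamma 0 0 + (a : ℂ) • Gamma 1 1 + (b : ℂ) • Gamma 2 2 + (c : ℂ) • Gamma 3 3) =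
        coherencyMatrix (diagonal ![1, a, b, c]) := by
    simp [coherencyMatrix_diagonal_eq_sum, Fin.sum_univ_four]
  rw [hC, coherency_eq]
  refine ⟨coherencyMatrix_diagonal_vec 1 ε₁ ε₂ ε₃, ?_, ?_⟩
  · rw [posSemidef_coherencyMatrix_diagonal_signs_iff h₁ h₂ h₃]
    rcases h₁ with rfl | rfl <;> rcases h₂ with rfl | rfl <;> rcases h₃ with rfl | rfl <;> norm_num
  · have coherency_neg_one := coherency_eq (-1) (-1) (-1)
    push_cast at coherency_neg_one
    rw [coherency_neg_one, posSemidef_coherencyMatrix_diagonal_vec_iff]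
    norm_num
end
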